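/- For v ∈ V define the boson field operator φ(v) on ℝ-differentiable functions F : V → ℂ by (φ(v)F)(u) := −√2·i·(½⟨u,v⟩·F(u) − (DF)(u)(v)), where (DF)(u) denotes the real Fréchet derivative of F at u. Then for every twice continuously differentiable F : V → ℂ and all v, w ∈ V, the canonical commutation relation φ(v)(φ(w)F) − φ(w)(φ(v)F) = 2i·s(v,w)·F holds pointwise on V. -/

import Mathlib

open scoped RealInnerProductSpace

/-- The complex scalar product `⟨u,v⟩ := d(u,v) + i·d(Ju,v)` on `V` (antilinear in `u`)
associated to the complex structure `J`. -/
noncomputable def cInner {V : Type*} [NormedAddCommGroup V] [InnerProductSpace ℝ V]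
    (J : Module.End ℝ V) (u v : V) : ℂ :=
  Complex.ofReal ⟪u, v⟫ + Complex.ofReal ⟪J u, v⟫ * Complex.I

/-- The boson field operator
`(φ(v)F)(u) := −√2·i·(½⟨u,v⟩·F(u) − (DF)(u)(v))`, where `(DF)(u)` is the real Fréchet
derivative of `F` at `u`. -/
noncomputable def bosonField {V : Type*} [NormedAddCommGroup V] [InnerProductSpace ℝ V]
    (J : Module.End ℝ V) (v : V) (F : V → ℂ) : V → ℂ :=
  fun u => -(Real.sqrt 2 : ℂ) * Complex.I *
    ((2⁻¹ : ℂ) * cInner J u v * F u - fderiv ℝ F u v)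

/-!
Write `φ(v) = c (a_v - D_v)` with `c = -√2 i`, where `a_v` is multiplication by `u ↦ ½⟨u,v⟩` and
`D_v` is the directional derivative. Multiplications commute with each other and, on `C²` functions,
so do directional derivatives, so `[a_v - D_v, a_w - D_w]` is multiplication by `D_w a_v - D_v a_w`.
Since `⟨·,v⟩` is real-linear, this function is the constant `½(⟨w,v⟩ - ⟨v,w⟩)`. It equals
`-i d(Jv,w)` because `J` is skew-adjoint for `d`, and `c² = -2`.
-/

section MulSubFDeriv

variable (𝕜 : Type*) [NontriviallyNormedField 𝕜]
  {E : Type*} [NormedAddCommGroup E] [NormedSpace 𝕜 E]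
  {A : Type*} [NormedCommRing A] [NormedAlgebra 𝕜 A]

/-- The first-order differential operator `a - D_v`: multiplication by the function `a` minus the
derivative in the direction `v`. The field operator `φ(v)` is a scalar multiple of such an operator.
Where `F` is not differentiable, the derivative term is `0`. -/
noncomputable def mulSubFDeriv (a : E → A) (v : E) (F : E → A) : E → A :=
  fun u => a u * F u - fderiv 𝕜 F u v

lemma mulSubFDeriv_apply (a : E → A) (v : E) (F : E → A) (u : E) :
    mulSubFDeriv 𝕜 a v F u = a u * F u - fderiv 𝕜 F u v :=
  rfl

lemma mulSubFDeriv_const_smul {R : Type*} [DivisionRing R] [Module R A] [SMulCommClass 𝕜 R A]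
    [ContinuousConstSMul R A] [SMulCommClass R A A] (c : R) (a : E → A) (v : E) (F : E → A) :
    mulSubFDeriv 𝕜 a v (c • F) = c • mulSubFDeriv 𝕜 a v F := by
  ext u
  simp only [mulSubFDeriv_apply, fderiv_const_smul_field, Pi.smul_apply, smul_apply, smul_sub,
    mul_smul_comm]

variable {𝕜}

lemma fderiv_mulSubFDeriv_apply {a F : E → A} {u : E} (ha : DifferentiableAt 𝕜 a u)
    (hF : DifferentiableAt 𝕜 F u) (hF' : DifferentiableAt 𝕜 (fderiv 𝕜 F) u) (v w : E) :
    fderiv 𝕜 (mulSubFDeriv 𝕜 a v F) u w =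
      a u * fderiv 𝕜 F u w + F u * fderiv 𝕜 a u w - fderiv 𝕜 (fderiv 𝕜 F) u w v := by
  have hop : HasFDerivAt (mulSubFDeriv 𝕜 a v F) _ u :=
    (ha.hasFDerivAt.mul hF.hasFDerivAt).sub (hF'.hasFDerivAt.clm_apply (hasFDerivAt_const v u))
  simp [hop.fderiv]

theorem mulSubFDeriv_commutator {a b F : E → A} {u : E} {n : WithTop ℕ∞}
    (ha : DifferentiableAt 𝕜 a u) (hb : DifferentiableAt 𝕜 b u)
    (hF : ContDiffAt 𝕜 n F u) (hn : minSmoothness 𝕜 2 ≤ n) (v w : E) :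
    mulSubFDeriv 𝕜 a v (mulSubFDeriv 𝕜 b w F) u - mulSubFDeriv 𝕜 b w (mulSubFDeriv 𝕜 a v F) u =
      (fderiv 𝕜 a u w - fderiv 𝕜 b u v) * F u := by
  have hF₂ : ContDiffAt 𝕜 2 F u := hF.of_le (le_minSmoothness.trans hn)
  have hF₁ : DifferentiableAt 𝕜 F u := hF₂.differentiableAt two_ne_zero
  have hF' : DifferentiableAt 𝕜 (fderiv 𝕜 F) u :=
    (hF₂.fderiv_right (m := 1) one_add_one_eq_two.le).differentiableAt one_ne_zero
  have hsymm : fderiv 𝕜 (fderiv 𝕜 F) u v w = fderiv 𝕜 (fderiv 𝕜 F) u w v :=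
    hF.isSymmSndFDerivAt hn v w
  simp only [mulSubFDeriv_apply, fderiv_mulSubFDeriv_apply ha hF₁ hF',
    fderiv_mulSubFDeriv_apply hb hF₁ hF', hsymm]
  ring

end MulSubFDeriv

lemma isSkewAdjoint_of_mul_self_eq_neg_one {R M N : Type*} [CommRing R] [AddCommGroup M]
    [Module R M] [AddCommGroup N] [Module R N] {B : M →ₗ[R] M →ₗ[R] N} {J : Module.End R M}
    (hJ : J * J = -1) (hB : ∀ x y, B (J x) (J y) = B x y) : B.IsSkewAdjoint J := by
  intro x y
  have hJJ : J (J x) = -x := LinearMap.congr_fun hJ x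
  calc B (J x) y = B (J (J x)) (J y) := (hB _ _).symm
    _ = B x ((-J) y) := by simp [hJJ]

section BosonField

variable {V : Type*} [NormedAddCommGroup V] [InnerProductSpace ℝ V] {J : Module.End ℝ V}

lemma inner_map_eq_neg_inner_map_swap (hJ : (innerₗ V).IsSkewAdjoint J) (v w : V) :
    ⟪J v, w⟫ = -⟪J w, v⟫ := by
  simpa [real_inner_comm v (J w)] using hJ v w

-- Boundedness comes from `d(Ju, v) = -d(u, Jv)`, since `J` itself may be unbounded.
lemma isBoundedLinearMap_cInner_left (hJ : (innerₗ V).IsSkewAdjoint J) (v : V) :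
    IsBoundedLinearMap ℝ fun u => cInner J u v := by
  let L : V →L[ℝ] ℂ := (innerSL ℝ v).smulRight 1 - (innerSL ℝ (J v)).smulRight Complex.I
  have hL : (fun u => cInner J u v) = L := by
    ext1 u
    simp [L, cInner, inner_map_eq_neg_inner_map_swap hJ u v, real_inner_comm v u, sub_eq_add_neg]
  exact hL ▸ L.isBoundedLinearMap

lemma fderiv_cInner_left_apply (hJ : (innerₗ V).IsSkewAdjoint J) (u v w : V) :
    fderiv ℝ (fun x => cInner J x v) u w = cInner J w v := by
  rw [(isBoundedLinearMap_cInner_left hJ v).fderiv]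
  rfl

lemma cInner_sub_cInner_swap (hJ : (innerₗ V).IsSkewAdjoint J) (v w : V) :
    cInner J v w - cInner J w v = 2 * Complex.I * Complex.ofReal ⟪J v, w⟫ := by
  simp only [cInner, real_inner_comm v w, inner_map_eq_neg_inner_map_swap hJ w v,
    Complex.ofReal_neg]
  ring

lemma bosonField_eq_smul_mulSubFDeriv (J : Module.End ℝ V) (v : V) (F : V → ℂ) :
    bosonField J v F = (-(Real.sqrt 2 : ℂ) * Complex.I) •
      mulSubFDeriv ℝ (fun u => (2⁻¹ : ℂ) * cInner J u v) v F :=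
  rfl

lemma neg_sqrt_two_mul_I_mul_self :
    (-(Real.sqrt 2 : ℂ) * Complex.I) * (-(Real.sqrt 2 : ℂ) * Complex.I) = -2 := by
  have hsqrt : (Real.sqrt 2 : ℂ) ^ 2 = 2 := mod_cast Real.sq_sqrt zero_le_two
  linear_combination (Real.sqrt 2 : ℂ) ^ 2 * Complex.I_sq - hsqrt

lemma bosonField_bosonField (J : Module.End ℝ V) (v w : V) (F : V → ℂ) :
    bosonField J v (bosonField J w F) =
      (-2 : ℂ) • mulSubFDeriv ℝ (fun u => (2⁻¹ : ℂ) * cInner J u v) v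
        (mulSubFDeriv ℝ (fun u => (2⁻¹ : ℂ) * cInner J u w) w F) := by
  rw [bosonField_eq_smul_mulSubFDeriv J v, bosonField_eq_smul_mulSubFDeriv J w,
    mulSubFDeriv_const_smul, smul_smul, neg_sqrt_two_mul_I_mul_self]

theorem stmt_18_general (hJ : (innerₗ V).IsSkewAdjoint J) {F : V → ℂ} {u : V}
    (hF : ContDiffAt ℝ 2 F u) (v w : V) :
    bosonField J v (bosonField J w F) u - bosonField J w (bosonField J v F) u =
      2 * Complex.I * Complex.ofReal ⟪J v, w⟫ * F u := by
  have hdiff (x : V) : DifferentiableAt ℝ (fun y => cInner J y x) u :=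
    (isBoundedLinearMap_cInner_left hJ x).differentiableAt
  have hcomm := mulSubFDeriv_commutator ((hdiff v).const_mul 2⁻¹) ((hdiff w).const_mul 2⁻¹) hF
    minSmoothness_of_isRCLikeNormedField.le v w
  simp only [fderiv_const_mul (hdiff _), smul_apply, smul_eq_mul,
    fderiv_cInner_left_apply hJ] at hcomm
  simp only [bosonField_bosonField, Pi.smul_apply, smul_eq_mul]
  linear_combination (-2) * hcomm + F u * cInner_sub_cInner_swap hJ v w

end BosonField

/-- For every twice continuously differentiable `F : V → ℂ` and all
`v, w ∈ V`, the canonical commutation relation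
`φ(v)(φ(w)F) − φ(w)(φ(v)F) = 2i·s(v,w)·F` holds pointwise on `V`, where
`s(v,w) := d(Jv,w)`. -/
theorem stmt_18 {V : Type*} [NormedAddCommGroup V] [InnerProductSpace ℝ V]
    [FiniteDimensional ℝ V] (m : ℕ) (hdim : Module.finrank ℝ V = 2 * m)
    (J : Module.End ℝ V) (hJ2 : J * J = -1)
    (hJd : ∀ u v : V, ⟪J u, J v⟫ = ⟪u, v⟫)
    (F : V → ℂ) (hF : ContDiff ℝ 2 F) (v w : V) :
    ∀ u : V, bosonField J v (bosonField J w F) u - bosonField J w (bosonField J v F) u =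
      2 * Complex.I * Complex.ofReal ⟪J v, w⟫ * F u := by
  have hskew : (innerₗ V).IsSkewAdjoint J := isSkewAdjoint_of_mul_self_eq_neg_one hJ2 hJd
  exact fun u => stmt_18_general hskew hF.contDiffAt v w
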